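/- Let m ≥ 2 and N ≥ 1. For every m-homogeneous polynomial P(z) = ∑_{|α|=m} c_α z^α in N complex variables one has (∑_{|α|=m} |c_α|^{2m/(m+1)})^{(m+1)/(2m)} ≤ 2^{m/2} · m^{(m-1)/(2m)} · (m/(m-1))^{m-1} · sup_{z ∈ closed unit polydisc of ℂ^N} |P(z)|. -/

import Mathlib

open Finset

/-!
Blei's mixed-norm inequality, with the multinomial coefficients as weights, bounds the
`ℓ^{2m/(m+1)}`-norm of the coefficients of `P` by a sum over `l` of weighted `ℓ²`-norms of the
coefficients of `∂P/∂z_l`. With the weights `∏ j, (α j + 1)⁻¹` these are norms in the Bergman space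
of the polydisc, which contains the Hardy space `H¹` contractively: in one variable this is
Carleman's inequality, proved by factoring a function as a product of two functions of equal modulus
on the circle, and Minkowski's inequality allows one to iterate it over the variables. It remains
to bound the average of `∑ l, |∂P/∂z_l|` over the torus; Cauchy's estimate on a disc of radius
`1 / (m - 1)` in the direction that aligns the phases of the derivatives bounds this sum pointwise.
Finally, `∏ j, (α j + 1) ≤ 2 ^ m` removes the weights.
-/

section Hardy

open Metric Real Nat

/-- The `n`-th Taylor coefficient of `h` at the origin. -/
noncomputable def taylorCoeff (h : ℂ → ℂ) (n : ℕ) : ℂ :=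
  iteratedDeriv n h 0 / n !

theorem taylorCoeff_congr {g h : ℂ → ℂ} (hgh : Set.EqOn g h (ball 0 1)) (n : ℕ) :
    taylorCoeff g n = taylorCoeff h n := by
  have hev : g =ᶠ[nhds 0] h := hgh.eventuallyEq_of_mem (ball_mem_nhds 0 one_pos)
  rw [taylorCoeff, taylorCoeff, hev.iteratedDeriv_eq n]

theorem taylorCoeff_mul {g h : ℂ → ℂ} {n : ℕ} (hg : ContDiffAt ℂ n g 0)
    (hh : ContDiffAt ℂ n h 0) :
    taylorCoeff (g * h) n = ∑ ij ∈ antidiagonal n, taylorCoeff g ij.1 * taylorCoeff h ij.2 := by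
  rw [Nat.sum_antidiagonal_eq_sum_range_succ (fun i j ↦ taylorCoeff g i * taylorCoeff h j),
    taylorCoeff, iteratedDeriv_mul hg hh, sum_div]
  refine sum_congr rfl fun i hi ↦ ?_
  have hin : i ≤ n := Nat.lt_succ_iff.mp (mem_range.mp hi)
  have hn : (n ! : ℂ) ≠ 0 := mod_cast n.factorial_ne_zero
  rw [Nat.cast_choose ℂ hin, taylorCoeff, taylorCoeff]
  field_simp

theorem taylorCoeff_polynomial_eval (p : Polynomial ℂ) (n : ℕ) :
    taylorCoeff (fun z ↦ p.eval z) n = p.coeff n := by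
  have hderiv (k : ℕ) : iteratedDeriv k (fun z ↦ p.eval z) =
      fun z ↦ (Polynomial.derivative^[k] p).eval z := by
    induction k with
    | zero => simp
    | succ k ih =>
      rw [iteratedDeriv_succ, ih]
      funext z
      rw [Function.iterate_succ_apply', Polynomial.deriv]
  have hn : (n ! : ℂ) ≠ 0 := mod_cast n.factorial_ne_zero
  simp [taylorCoeff, hderiv, ← Polynomial.coeff_zero_eq_eval_zero,
    Polynomial.coeff_iterate_derivative, Nat.descFactorial_self, hn]

theorem circleAverage_inv_pow_mul_eq_taylorCoeff {h : ℂ → ℂ} (hh : DiffContOnCl ℂ h (ball 0 1))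
    (n : ℕ) : circleAverage (fun z ↦ (z ^ n)⁻¹ * h z) 0 1 = taylorCoeff h n := by
  have hcauchy := hh.circleIntegral_one_div_sub_center_pow_smul one_pos n
  have hint : (fun z : ℂ ↦ (z - 0)⁻¹ • ((z ^ n)⁻¹ * h z)) =
      fun z ↦ (1 / (z - 0) ^ (n + 1)) • h z := by
    funext z
    simp only [sub_zero, smul_eq_mul, pow_succ, one_div, mul_inv]
    ring
  rw [circleAverage_eq_circleIntegral one_ne_zero, hint, hcauchy, taylorCoeff, smul_smul,
    smul_eq_mul]
  field_simp [Complex.two_pi_I_ne_zero]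

theorem fourierCoeffOn_circleMap_eq_taylorCoeff {h : ℂ → ℂ}
    (hh : DiffContOnCl ℂ h (ball 0 1)) (n : ℕ) :
    fourierCoeffOn two_pi_pos (fun θ ↦ h (circleMap 0 1 θ)) n = taylorCoeff h n := by
  rw [← circleAverage_inv_pow_mul_eq_taylorCoeff hh, fourierCoeffOn_eq_integral, circleAverage,
    sub_zero, one_div]
  refine congrArg _ (intervalIntegral.integral_congr fun θ _ ↦ ?_)
  have hpi : (π : ℂ) ≠ 0 := mod_cast pi_ne_zero
  simp only [smul_eq_mul, fourier_coe_apply, circleMap_zero, Complex.ofReal_one, one_mul,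
    ← Complex.exp_nat_mul, ← Complex.exp_neg]
  congr 2
  push_cast
  field_simp

theorem continuous_comp_circleMap {h : ℂ → ℂ} (hh : DiffContOnCl ℂ h (ball 0 1)) :
    Continuous fun θ ↦ h (circleMap 0 1 θ) :=
  hh.continuousOn_ball.comp_continuous (continuous_circleMap 0 1)
    (circleMap_mem_closedBall 0 zero_le_one)

theorem sum_norm_taylorCoeff_sq_le {h : ℂ → ℂ} (hh : DiffContOnCl ℂ h (ball 0 1))
    (s : Finset ℕ) :
    ∑ n ∈ s, ‖taylorCoeff h n‖ ^ 2 ≤ circleAverage (fun z ↦ ‖h z‖ ^ 2) 0 1 := by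
  have hcont : Continuous fun θ ↦ h (circleMap 0 1 θ) := continuous_comp_circleMap hh
  obtain ⟨C, hC⟩ := (isCompact_Icc (a := 0) (b := 2 * π)).exists_bound_of_continuousOn
    hcont.continuousOn
  have hL2 : MeasureTheory.MemLp (fun θ ↦ h (circleMap 0 1 θ)) 2
      (MeasureTheory.volume.restrict (Set.Ioc 0 (2 * π))) :=
    .of_bound hcont.aestronglyMeasurable C <|
      (MeasureTheory.ae_restrict_iff' measurableSet_Ioc).mpr <|
        .of_forall fun θ hθ ↦ hC θ (Set.Ioc_subset_Icc_self hθ)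
  have hbessel := sum_le_hasSum (s.map Nat.castEmbedding) (fun _ _ ↦ by positivity)
    (hasSum_sq_fourierCoeffOn two_pi_pos hL2)
  simpa [circleAverage, fourierCoeffOn_circleMap_eq_taylorCoeff hh] using hbessel

/-- The canonical factorization of functions of the Hardy space `H¹` of the disc, for functions
continuous up to the boundary: `f` is a product of two functions of equal modulus on the unit
circle, both analytic in the disc and continuous up to the boundary. -/
def HasHardyFactorization (f : ℂ → ℂ) : Prop :=
  ∃ g k : ℂ → ℂ, DiffContOnCl ℂ g (ball 0 1) ∧ DiffContOnCl ℂ k (ball 0 1) ∧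
    Set.EqOn f (g * k) (closedBall 0 1) ∧ ∀ z ∈ sphere 0 1, ‖g z‖ = ‖k z‖

namespace HasHardyFactorization

theorem of_sq {g f : ℂ → ℂ} (hg : DiffContOnCl ℂ g (ball 0 1))
    (hf : ∀ z, f z = g z ^ 2) : HasHardyFactorization f :=
  ⟨g, g, hg, hg, fun z _ ↦ (hf z).trans (sq _), fun _ _ ↦ rfl⟩

theorem const (a : ℂ) : HasHardyFactorization fun _ ↦ a := by
  obtain ⟨s, rfl⟩ := IsAlgClosed.exists_pow_nat_eq a two_pos
  exact of_sq diffContOnCl_const fun _ ↦ rfl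

theorem mul {f₁ f₂ : ℂ → ℂ} (h₁ : HasHardyFactorization f₁) (h₂ : HasHardyFactorization f₂) :
    HasHardyFactorization (f₁ * f₂) := by
  obtain ⟨g₁, k₁, hg₁, hk₁, hf₁, heq₁⟩ := h₁
  obtain ⟨g₂, k₂, hg₂, hk₂, hf₂, heq₂⟩ := h₂
  refine ⟨g₁ * g₂, k₁ * k₂, hg₁.smul hg₂, hk₁.smul hk₂, fun z hz ↦ ?_, fun z hz ↦ ?_⟩
  · simp only [Pi.mul_apply, hf₁ hz, hf₂ hz]
    ring
  · simp only [Pi.mul_apply, norm_mul, heq₁ z hz, heq₂ z hz]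

end HasHardyFactorization

theorem complex_sqrt_sq (a : ℂ) : Complex.sqrt a ^ 2 = a :=
  Complex.cpow_ofNat_inv_pow a 2

theorem norm_mul_lt_one {w z : ℂ} (hw : ‖w‖ ≤ 1) (hz : ‖z‖ < 1) : ‖w * z‖ < 1 := by
  rw [norm_mul]
  exact mul_lt_one_of_nonneg_of_lt_one_right hw (norm_nonneg z) hz

theorem diffContOnCl_sqrt_one_sub_mul {w : ℂ} (hw : ‖w‖ ≤ 1) :
    DiffContOnCl ℂ (fun z ↦ Complex.sqrt (1 - w * z)) (ball 0 1) := by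
  refine .mk_ball (fun z hz ↦ ?_) fun z hz ↦ ?_
  · have hlt : ‖w * z‖ < 1 := norm_mul_lt_one hw (mem_ball_zero_iff.mp hz)
    have hslit : 1 - w * z ∈ Complex.slitPlane :=
      .inl <| by simpa using (Complex.re_le_norm (w * z)).trans_lt hlt
    exact ((Complex.differentiableAt_sqrt hslit).comp z (f := fun z ↦ 1 - w * z)
      (by fun_prop)).differentiableWithinAt
  · have hle : ‖w * z‖ ≤ 1 := by
      rw [norm_mul]
      exact mul_le_one₀ hw (norm_nonneg z) (mem_closedBall_zero_iff.mp hz)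
    have hre : 0 ≤ (1 - w * z).re := by simpa using (Complex.re_le_norm (w * z)).trans hle
    exact (ContinuousAt.comp (f := fun z ↦ 1 - w * z) (Complex.continuousAt_sqrt (.inl hre))
      (by fun_prop)).continuousWithinAt

theorem norm_one_sub_conj_mul {w z : ℂ} (hz : ‖z‖ = 1) :
    ‖1 - starRingEnd ℂ w * z‖ = ‖z - w‖ := by
  have hzz : z * starRingEnd ℂ z = 1 := by simp [Complex.mul_conj', hz]
  calc ‖1 - starRingEnd ℂ w * z‖ = ‖z * starRingEnd ℂ (z - w)‖ := by
        rw [map_sub, mul_sub, hzz, mul_comm z]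
    _ = ‖z - w‖ := by rw [norm_mul, hz, RCLike.norm_conj, one_mul]

namespace HasHardyFactorization

theorem sub_of_one_le_norm {w : ℂ} (hw : 1 ≤ ‖w‖) : HasHardyFactorization fun z ↦ z - w := by
  have hw0 : w ≠ 0 := norm_pos_iff.mp (one_pos.trans_le hw)
  obtain ⟨s, hs⟩ := IsAlgClosed.exists_pow_nat_eq (-w) two_pos
  have hdiff := (diffContOnCl_sqrt_one_sub_mul (w := w⁻¹)
    ((norm_inv w).trans_le (inv_le_one_of_one_le₀ hw))).const_smul s
  refine of_sq hdiff fun z ↦ ?_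
  rw [Pi.smul_apply, smul_eq_mul, mul_pow, hs, complex_sqrt_sq]
  field_simp
  ring

-- With the Blaschke factor `b z = (z - w) / (1 - conj w * z)`, factor `z - w` as
-- `√(1 - conj w * z) * (√(1 - conj w * z) * b z)`.
theorem sub_of_norm_lt_one {w : ℂ} (hw : ‖w‖ < 1) : HasHardyFactorization fun z ↦ z - w := by
  set w' := starRingEnd ℂ w with hw'_def
  have hw' : ‖w'‖ < 1 := by rwa [hw'_def, RCLike.norm_conj]
  have hne (z : ℂ) (hz : z ∈ closedBall 0 1) : 1 - w' * z ≠ 0 := fun h0 ↦ by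
    have hlt : ‖z * w'‖ < 1 := norm_mul_lt_one (mem_closedBall_zero_iff.mp hz) hw'
    simp [mul_comm z, ← sub_eq_zero.mp h0] at hlt
  have hsqrt : DiffContOnCl ℂ (fun z ↦ Complex.sqrt (1 - w' * z)) (ball 0 1) :=
    diffContOnCl_sqrt_one_sub_mul hw'.le
  have hblaschke : DiffContOnCl ℂ (fun z ↦ (z - w) • (1 - w' * z)⁻¹) (ball 0 1) := by
    refine DiffContOnCl.smul (Differentiable.diffContOnCl (by fun_prop))
      (DiffContOnCl.inv (Differentiable.diffContOnCl (by fun_prop)) fun z hz ↦ ?_)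
    exact hne z (closure_ball_subset_closedBall hz)
  refine ⟨_, _, hsqrt, hblaschke.smul hsqrt, fun z hz ↦ ?_, fun z hz ↦ ?_⟩
  · have hz0 := hne z hz
    calc z - w = (z - w) * (1 - w' * z)⁻¹ * Complex.sqrt (1 - w' * z) ^ 2 := by
          rw [complex_sqrt_sq, mul_assoc, inv_mul_cancel₀ hz0, mul_one]
      _ = _ := by
          simp only [Pi.mul_apply, smul_eq_mul]
          ring
  · have hz0 := norm_ne_zero_iff.mpr (hne z (sphere_subset_closedBall hz))
    have hz1 : ‖1 - w' * z‖ = ‖z - w‖ := norm_one_sub_conj_mul (mem_sphere_zero_iff_norm.mp hz)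
    rw [smul_eq_mul, smul_eq_mul, norm_mul, norm_mul, norm_inv, ← hz1, mul_inv_cancel₀ hz0, one_mul]

theorem sub (w : ℂ) : HasHardyFactorization fun z ↦ z - w :=
  (lt_or_ge ‖w‖ 1).elim sub_of_norm_lt_one sub_of_one_le_norm

theorem polynomial_eval (p : Polynomial ℂ) : HasHardyFactorization fun z ↦ p.eval z := by
  have hroots (s : Multiset ℂ) : HasHardyFactorization fun z ↦ (s.map fun w ↦ z - w).prod := by
    induction s using Multiset.induction with
    | empty => simpa using const 1
    | cons w s ih => simpa using! (sub w).mul ih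
  convert (const p.leadingCoeff).mul (hroots p.roots) using 1
  funext z
  conv_lhs => rw [(IsAlgClosed.splits p).eq_prod_roots]
  simp [Polynomial.eval_multiset_prod, Multiset.map_map]

end HasHardyFactorization

theorem norm_sum_antidiagonal_mul_sq_le (a b : ℕ → ℂ) (n : ℕ) :
    ‖∑ ij ∈ antidiagonal n, a ij.1 * b ij.2‖ ^ 2 / (n + 1) ≤
      ∑ ij ∈ antidiagonal n, ‖a ij.1‖ ^ 2 * ‖b ij.2‖ ^ 2 := by
  rw [div_le_iff₀' (by positivity)]
  calc ‖∑ ij ∈ antidiagonal n, a ij.1 * b ij.2‖ ^ 2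
      ≤ (∑ ij ∈ antidiagonal n, ‖a ij.1‖ * ‖b ij.2‖) ^ 2 := by
        gcongr
        exact norm_sum_le_of_le _ fun ij _ ↦ (norm_mul _ _).le
    _ ≤ (n + 1) * ∑ ij ∈ antidiagonal n, ‖a ij.1‖ ^ 2 * ‖b ij.2‖ ^ 2 := by
        simpa [mul_pow] using
          sq_sum_le_card_mul_sum_sq (s := antidiagonal n) (f := fun ij ↦ ‖a ij.1‖ * ‖b ij.2‖)

theorem sum_range_sum_antidiagonal_le {a b : ℕ → ℝ} (ha : ∀ n, 0 ≤ a n) (hb : ∀ n, 0 ≤ b n)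
    (M : ℕ) :
    ∑ n ∈ range M, ∑ ij ∈ antidiagonal n, a ij.1 * b ij.2 ≤
      (∑ n ∈ range M, a n) * ∑ n ∈ range M, b n := by
  rw [sum_mul_sum, ← sum_product', sum_sigma', ← sum_image (f := fun ij ↦ a ij.1 * b ij.2)
    (g := Sigma.snd) (s := (range M).sigma fun n ↦ antidiagonal n)]
  · refine sum_le_sum_of_subset_of_nonneg (fun ij hij ↦ ?_)
      fun ij _ _ ↦ mul_nonneg (ha ij.1) (hb ij.2)
    grind [HasAntidiagonal.mem_antidiagonal]
  · rintro ⟨n, ij⟩ hn ⟨n', ij'⟩ hn' rfl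
    grind [HasAntidiagonal.mem_antidiagonal]

theorem HasHardyFactorization.sum_norm_taylorCoeff_sq_div_le {f : ℂ → ℂ}
    (hf : HasHardyFactorization f) (s : Finset ℕ) :
    ∑ n ∈ s, ‖taylorCoeff f n‖ ^ 2 / (n + 1) ≤ circleAverage (fun z ↦ ‖f z‖) 0 1 ^ 2 := by
  obtain ⟨g, k, hg, hk, hfgk, hnorm⟩ := hf
  obtain ⟨M, hsM⟩ := s.exists_nat_subset_range
  have hfg : circleAverage (fun z ↦ ‖g z‖ ^ 2) 0 1 = circleAverage (fun z ↦ ‖f z‖) 0 1 := by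
    refine circleAverage_congr_sphere fun z hz ↦ ?_
    rw [abs_one] at hz
    simp only [hfgk (sphere_subset_closedBall hz), Pi.mul_apply, norm_mul, ← hnorm z hz, sq]
  have hfk : circleAverage (fun z ↦ ‖k z‖ ^ 2) 0 1 = circleAverage (fun z ↦ ‖g z‖ ^ 2) 0 1 := by
    refine circleAverage_congr_sphere fun z hz ↦ ?_
    rw [abs_one] at hz
    simp only [hnorm z hz]
  have hsmooth {h : ℂ → ℂ} (hh : DiffContOnCl ℂ h (ball 0 1)) (n : ℕ) : ContDiffAt ℂ n h 0 :=
    (hh.differentiableOn.analyticAt (ball_mem_nhds 0 one_pos)).contDiffAt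
  have hconv (n : ℕ) : taylorCoeff f n =
      ∑ ij ∈ antidiagonal n, taylorCoeff g ij.1 * taylorCoeff k ij.2 := by
    rw [taylorCoeff_congr (hfgk.mono ball_subset_closedBall),
      taylorCoeff_mul (hsmooth hg n) (hsmooth hk n)]
  calc ∑ n ∈ s, ‖taylorCoeff f n‖ ^ 2 / (n + 1)
      ≤ ∑ n ∈ range M, ‖taylorCoeff f n‖ ^ 2 / (n + 1) :=
        sum_le_sum_of_subset_of_nonneg hsM fun _ _ _ ↦ by positivity
    _ ≤ ∑ n ∈ range M, ∑ ij ∈ antidiagonal n,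
          ‖taylorCoeff g ij.1‖ ^ 2 * ‖taylorCoeff k ij.2‖ ^ 2 := by
        simp only [hconv]
        exact sum_le_sum fun n _ ↦ norm_sum_antidiagonal_mul_sq_le _ _ n
    _ ≤ (∑ n ∈ range M, ‖taylorCoeff g n‖ ^ 2) * ∑ n ∈ range M, ‖taylorCoeff k n‖ ^ 2 :=
        sum_range_sum_antidiagonal_le (a := fun n ↦ ‖taylorCoeff g n‖ ^ 2)
          (b := fun n ↦ ‖taylorCoeff k n‖ ^ 2) (fun _ ↦ by positivity) (fun _ ↦ by positivity) M
    _ ≤ circleAverage (fun z ↦ ‖g z‖ ^ 2) 0 1 * circleAverage (fun z ↦ ‖k z‖ ^ 2) 0 1 :=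
        mul_le_mul (sum_norm_taylorCoeff_sq_le hg _) (sum_norm_taylorCoeff_sq_le hk _)
          (by positivity) (circleAverage_nonneg_of_nonneg fun _ _ ↦ by positivity)
    _ = circleAverage (fun z ↦ ‖f z‖) 0 1 ^ 2 := by rw [hfk, hfg, sq]

theorem sum_norm_coeff_sq_div_le_circleAverage_sq (p : Polynomial ℂ) (s : Finset ℕ) :
    ∑ n ∈ s, ‖p.coeff n‖ ^ 2 / (n + 1) ≤ circleAverage (fun z ↦ ‖p.eval z‖) 0 1 ^ 2 := by
  simpa only [taylorCoeff_polynomial_eval] using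
    (HasHardyFactorization.polynomial_eval p).sum_norm_taylorCoeff_sq_div_le s

end Hardy

section Torus

open MeasureTheory MvPolynomial Real

theorem sqrt_sum_sq_integral_le {X ι : Type*} [MeasurableSpace X] {μ : Measure X} {s : Finset ι}
    {f : ι → X → ℝ} (hf : ∀ i ∈ s, Integrable (f i) μ) :
    √(∑ i ∈ s, (∫ x, f i x ∂μ) ^ 2) ≤ ∫ x, √(∑ i ∈ s, f i x ^ 2) ∂μ := by
  have hint (i : s) : Integrable (fun x ↦ WithLp.toLp 2 (fun j : s ↦ f j x) i) μ := hf i i.2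
  have hmink := norm_integral_le_integral_norm (μ := μ) fun x ↦ WithLp.toLp 2 fun j : s ↦ f j x
  simp only [EuclideanSpace.norm_eq, eval_integral_piLp hint, norm_eq_abs, sq_abs] at hmink
  simpa only [sum_coe_sort s fun i ↦ (∫ x, f i x ∂μ) ^ 2,
    fun x ↦ sum_coe_sort s fun i ↦ f i x ^ 2] using hmink

theorem circleAverage_eq_integral_unitAddCircle (f : ℂ → ℝ) :
    circleAverage f 0 1 = ∫ t : UnitAddCircle, f t.toCircle := by
  have hscale := intervalIntegral.integral_comp_mul_left (a := 0) (b := 1)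
    (fun θ ↦ f (circleMap 0 1 θ)) two_pi_pos.ne'
  rw [mul_zero, mul_one] at hscale
  rw [← UnitAddCircle.intervalIntegral_preimage 0, zero_add, circleAverage, ← hscale]
  simp [AddCircle.toCircle_apply_mk, circleMap]

theorem measurePreserving_fin_cons (n : ℕ) (X : Type*) [MeasureSpace X]
    [SigmaFinite (volume : Measure X)] :
    MeasurePreserving fun p : X × (Fin n → X) ↦ (Fin.cons p.1 p.2 : Fin (n + 1) → X) := by
  simpa [MeasurableEquiv.piFinSuccAbove, Fin.insertNthEquiv] using!
    (volume_preserving_piFinSuccAbove (fun _ ↦ X) (0 : Fin (n + 1))).symm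

theorem integrable_comp_fin_cons {n : ℕ} {X E : Type*} [MeasureSpace X]
    [SigmaFinite (volume : Measure X)] [NormedAddCommGroup E] {f : (Fin (n + 1) → X) → E}
    (hf : Integrable f) : Integrable fun p : X × (Fin n → X) ↦ f (Fin.cons p.1 p.2) :=
  (measurePreserving_fin_cons n X).integrable_comp_of_integrable hf

theorem integral_fin_cons {n : ℕ} {X E : Type*} [MeasureSpace X]
    [SigmaFinite (volume : Measure X)] [NormedAddCommGroup E] [NormedSpace ℝ E]
    {f : (Fin (n + 1) → X) → E} (hf : Integrable f) :
    ∫ t, f t = ∫ s : Fin n → X, ∫ x : X, f (Fin.cons x s) := by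
  have hcons := (volume_preserving_piFinSuccAbove (fun _ ↦ X) (0 : Fin (n + 1))).symm
  rw [← integral_prod_symm _ (integrable_comp_fin_cons hf), ← hcons.integral_comp']
  simp [MeasurableEquiv.piFinSuccAbove, Fin.insertNthEquiv, Measure.volume_eq_prod]

instance isProbabilityMeasure_unitAddCircle :
    IsProbabilityMeasure (volume : Measure UnitAddCircle) :=
  ⟨UnitAddCircle.measure_univ⟩

variable {σ : Type*}

/-- The point `(e^{2πi t_j})_j` of the distinguished boundary of the polydisc. -/
noncomputable def torusPoint (t : UnitAddTorus σ) : σ → ℂ :=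
  fun j ↦ (t j).toCircle

theorem norm_torusPoint_apply (t : UnitAddTorus σ) (j : σ) : ‖torusPoint t j‖ = 1 :=
  Circle.norm_coe _

theorem torusPoint_cons {n : ℕ} (x : UnitAddCircle) (s : UnitAddTorus (Fin n)) :
    torusPoint (Fin.cons x s : UnitAddTorus (Fin (n + 1))) =
      Fin.cons (x.toCircle : ℂ) (torusPoint s) := by
  funext j
  cases j using Fin.cases <;> rfl

theorem continuous_torusPoint : Continuous (torusPoint : UnitAddTorus σ → σ → ℂ) := by
  unfold torusPoint
  fun_prop

/-- The norm of `P` in the Hardy space `H¹` of the polydisc. -/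
noncomputable def hardyNorm [Fintype σ] (P : MvPolynomial σ ℂ) : ℝ :=
  ∫ t : UnitAddTorus σ, ‖eval (torusPoint t) P‖

/-- The norm of `P` in the Bergman space `A²` of the polydisc with normalized volume, in which the
monomials `z ^ α` are orthogonal with squared norm `∏ j, (α j + 1)⁻¹`. -/
noncomputable def bergmanNorm [Fintype σ] (P : MvPolynomial σ ℂ) : ℝ :=
  √(∑ α ∈ P.support, ‖coeff α P‖ ^ 2 / ∏ j, ((α j : ℝ) + 1))

theorem bergmanNorm_nonneg [Fintype σ] (P : MvPolynomial σ ℂ) : 0 ≤ bergmanNorm P :=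
  sqrt_nonneg _

theorem bergmanNorm_sq [Fintype σ] (P : MvPolynomial σ ℂ) :
    bergmanNorm P ^ 2 = ∑ α ∈ P.support, ‖coeff α P‖ ^ 2 / ∏ j, ((α j : ℝ) + 1) :=
  sq_sqrt (sum_nonneg fun _ _ ↦ by positivity)

theorem integrable_norm_eval_torusPoint [Fintype σ] (P : MvPolynomial σ ℂ) :
    Integrable fun t : UnitAddTorus σ ↦ ‖eval (torusPoint t) P‖ :=
  ((P.continuous_eval.comp continuous_torusPoint).norm).integrable_of_hasCompactSupport
    (.of_compactSpace _)

theorem hardyNorm_eq_integral_integral {n : ℕ} (P : MvPolynomial (Fin (n + 1)) ℂ) :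
    hardyNorm P = ∫ s : UnitAddTorus (Fin n), ∫ x : UnitAddCircle,
      ‖eval (Fin.cons (x.toCircle : ℂ) (torusPoint s)) P‖ := by
  simp only [hardyNorm, integral_fin_cons (integrable_norm_eval_torusPoint P), torusPoint_cons]

theorem bergmanNorm_sq_eq_sum_finSuccEquiv {n : ℕ} (P : MvPolynomial (Fin (n + 1)) ℂ) :
    bergmanNorm P ^ 2 = ∑ k ∈ (finSuccEquiv ℂ n P).support,
      (bergmanNorm ((finSuccEquiv ℂ n P).coeff k) / √(k + 1)) ^ 2 := by
  rw [support_finSuccEquiv, bergmanNorm_sq,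
    ← sum_fiberwise_of_maps_to fun α hα ↦ mem_image_of_mem (fun β : Fin (n + 1) →₀ ℕ ↦ β 0) hα]
  refine sum_congr rfl fun k _ ↦ ?_
  rw [← image_support_finSuccEquiv, sum_image fun _ _ _ _ h ↦ Finsupp.cons_right_injective k h,
    div_pow, bergmanNorm_sq, sq_sqrt (by positivity), sum_div]
  refine sum_congr rfl fun β _ ↦ ?_
  rw [finSuccEquiv_coeff_coeff, Fin.prod_univ_succ, Finsupp.cons_zero]
  simp only [Finsupp.cons_succ]
  rw [div_div, mul_comm]

theorem sqrt_sum_norm_eval_finSuccEquiv_coeff_le {n : ℕ} (P : MvPolynomial (Fin (n + 1)) ℂ)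
    (z : Fin n → ℂ) (s : Finset ℕ) :
    √(∑ k ∈ s, (‖eval z ((finSuccEquiv ℂ n P).coeff k)‖ / √(k + 1)) ^ 2) ≤
      ∫ x : UnitAddCircle, ‖eval (Fin.cons (x.toCircle : ℂ) z) P‖ := by
  refine sqrt_le_iff.mpr ⟨integral_nonneg fun _ ↦ norm_nonneg _, ?_⟩
  have hcarleman := sum_norm_coeff_sq_div_le_circleAverage_sq
    ((finSuccEquiv ℂ n P).map (eval z)) s
  simpa only [circleAverage_eq_integral_unitAddCircle, ← eval_eq_eval_mv_eval', div_pow,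
    Polynomial.coeff_map, sq_sqrt (Nat.cast_add_one_pos _).le] using hcarleman

theorem bergmanNorm_le_hardyNorm {n : ℕ} (P : MvPolynomial (Fin n) ℂ) :
    bergmanNorm P ≤ hardyNorm P := by
  induction n with
  | zero =>
    have hsupp : P.support ⊆ {0} := fun α _ ↦ by simpa using Subsingleton.elim α 0
    rw [bergmanNorm, sum_subset hsupp (by simp +contextual), hardyNorm, eq_C_of_isEmpty P]
    simp
  | succ n ih =>
    set p := finSuccEquiv ℂ n P
    have hint (k : ℕ) : Integrable fun s : UnitAddTorus (Fin n) ↦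
        ‖eval (torusPoint s) (p.coeff k)‖ / √(k + 1) :=
      (integrable_norm_eval_torusPoint (p.coeff k)).div_const _
    calc bergmanNorm P
        = √(∑ k ∈ p.support, (bergmanNorm (p.coeff k) / √(k + 1)) ^ 2) := by
          rw [← bergmanNorm_sq_eq_sum_finSuccEquiv, sqrt_sq (bergmanNorm_nonneg P)]
      _ ≤ √(∑ k ∈ p.support, (hardyNorm (p.coeff k) / √(k + 1)) ^ 2) := by
          gcongr with k
          · exact div_nonneg (bergmanNorm_nonneg _) (sqrt_nonneg _)
          · exact ih (p.coeff k)
      _ = √(∑ k ∈ p.support, (∫ s, ‖eval (torusPoint s) (p.coeff k)‖ / √(k + 1)) ^ 2) := by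
          simp only [hardyNorm, integral_div]
      _ ≤ ∫ s, √(∑ k ∈ p.support, (‖eval (torusPoint s) (p.coeff k)‖ / √(k + 1)) ^ 2) :=
          sqrt_sum_sq_integral_le fun k _ ↦ hint k
      _ ≤ hardyNorm P := by
          rw [hardyNorm_eq_integral_integral]
          refine integral_mono_of_nonneg (.of_forall fun _ ↦ sqrt_nonneg _) ?_
            (.of_forall fun s ↦ sqrt_sum_norm_eval_finSuccEquiv_coeff_le P _ _)
          simpa only [torusPoint_cons] using
            (integrable_comp_fin_cons (integrable_norm_eval_torusPoint P)).integral_prod_right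

theorem sum_support_pderiv_add_single {R M : Type*} [CommSemiring R] [NoZeroDivisors R]
    [CharZero R] [AddCommMonoid M] (P : MvPolynomial σ R) (l : σ)
    {F : (σ →₀ ℕ) → M} (hF : ∀ α, α l = 0 → F α = 0) :
    ∑ β ∈ (pderiv l P).support, F (β + Finsupp.single l 1) = ∑ α ∈ P.support, F α := by
  refine sum_of_injOn (fun β ↦ β + Finsupp.single l 1) (add_left_injective _).injOn
    (fun β hβ ↦ ?_) (fun α hα hα_notMem ↦ hF α ?_) fun _ _ ↦ rfl
  · rw [mem_coe, mem_support_iff, coeff_pderiv] at hβ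
    exact mem_support_iff.mpr (left_ne_zero_of_mul hβ)
  · by_contra hαl
    have hα' := Finsupp.sub_add_single_one_cancel hαl
    refine hα_notMem ⟨α - Finsupp.single l 1, ?_, hα'⟩
    rw [mem_coe, mem_support_iff, coeff_pderiv, hα']
    exact mul_ne_zero (mem_support_iff.mp hα) (Nat.cast_add_one_ne_zero _)

theorem sum_sq_mul_norm_coeff_sq_div_le [Fintype σ] (P : MvPolynomial σ ℂ) (l : σ) :
    ∑ α ∈ P.support, (α l : ℝ) ^ 2 * (‖coeff α P‖ ^ 2 / ∏ j, ((α j : ℝ) + 1)) ≤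
      bergmanNorm (pderiv l P) ^ 2 := by
  rw [bergmanNorm_sq, ← sum_support_pderiv_add_single P l fun α hα ↦ by simp [hα]]
  refine sum_le_sum fun β _ ↦ ?_
  have hβl : ‖((β l : ℂ) + 1)‖ = ((β + Finsupp.single l 1 : σ →₀ ℕ) l : ℝ) := by
    rw [Finsupp.add_apply, Finsupp.single_eq_same]
    exact_mod_cast Complex.norm_natCast (β l + 1)
  rw [coeff_pderiv, norm_mul, hβl, mul_pow, mul_comm (‖_‖ ^ 2), mul_div_assoc]
  gcongr with j
  exact le_self_add

end Torus

section Blei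

variable {σ ι : Type*}

theorem one_le_sum_div_mul_prod_rpow [Fintype σ] {θ s : σ → ℝ} (hθ : ∀ l, 0 ≤ θ l)
    (hθ_sum : ∑ l, θ l = 1) (hs : ∀ l, 0 ≤ s l) (hθs : ∀ l, s l = 0 → θ l = 0) :
    1 ≤ (∑ l, θ l / s l) * ∏ l, s l ^ θ l := by
  calc 1 = (∏ l, (s l)⁻¹ ^ θ l) * ∏ l, s l ^ θ l := by
        rw [← prod_mul_distrib, prod_eq_one fun l _ ↦ ?_]
        by_cases hl : s l = 0
        · rw [hθs l hl, Real.rpow_zero, Real.rpow_zero, one_mul]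
        · rw [← Real.mul_rpow (inv_nonneg.mpr (hs l)) (hs l), inv_mul_cancel₀ hl, Real.one_rpow]
    _ ≤ (∑ l, θ l / s l) * ∏ l, s l ^ θ l := by
        gcongr
        · exact prod_nonneg fun l _ ↦ Real.rpow_nonneg (hs l) _
        · simpa only [div_eq_mul_inv] using Real.geom_mean_le_arith_mean_weighted univ θ
            (fun l ↦ (s l)⁻¹) (fun l _ ↦ hθ l) hθ_sum fun l _ ↦ inv_nonneg.mpr (hs l)

theorem sum_rpow_mul_rpow_le {A : Finset ι} {u v : ι → ℝ} (hu : ∀ i ∈ A, 0 ≤ u i)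
    (hv : ∀ i ∈ A, 0 ≤ v i) {a b : ℝ} (ha : 0 < a) (hb : 0 < b) (hab : a + b = 1) :
    ∑ i ∈ A, u i ^ a * v i ^ b ≤ (∑ i ∈ A, u i) ^ a * (∑ i ∈ A, v i) ^ b := by
  have hholder := Real.inner_le_Lp_mul_Lq_of_nonneg A (.inv_inv ha hb hab)
    (fun i hi ↦ Real.rpow_nonneg (hu i hi) a) fun i hi ↦ Real.rpow_nonneg (hv i hi) b
  simp only [one_div, inv_inv] at hholder
  rwa [sum_congr rfl fun i hi ↦ Real.rpow_rpow_inv (hu i hi) ha.ne',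
    sum_congr rfl fun i hi ↦ Real.rpow_rpow_inv (hv i hi) hb.ne'] at hholder

variable [Fintype σ]

theorem sum_multinomial_mul_prod_pow_le {m : ℕ} {A : Finset (σ →₀ ℕ)}
    (hA : ∀ α ∈ A, α.degree = m) {s : σ → ℝ} (hs : ∀ l, 0 ≤ s l) :
    ∑ α ∈ A, (Nat.multinomial univ α : ℝ) * ∏ l, s l ^ α l ≤ (∑ l, s l) ^ m := by
  classical
  rw [sum_pow_eq_sum_piAntidiag]
  refine (sum_map A ⟨_, DFunLike.coe_injective⟩ fun k : σ → ℕ ↦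
    (Nat.multinomial univ k : ℝ) * ∏ l, s l ^ k l).symm.trans_le <|
      sum_le_sum_of_subset_of_nonneg (fun k hk ↦ ?_)
        fun k _ _ ↦ mul_nonneg (Nat.cast_nonneg _) (prod_nonneg fun l _ ↦ pow_nonneg (hs l) _)
  obtain ⟨α, hα, rfl⟩ := mem_map.mp hk
  simp [mem_piAntidiag, ← hA α hα, Finsupp.degree_eq_sum]

theorem choose_le_multinomial (α : σ → ℕ) (l : σ) :
    (∑ j, α j).choose (α l) ≤ Nat.multinomial univ α := by
  classical
  rw [← add_sum_erase univ α (mem_univ l), ← insert_erase (mem_univ l),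
    Nat.multinomial_insert (notMem_erase l univ), erase_insert (notMem_erase l univ)]
  exact Nat.le_mul_of_pos_right _ (Nat.multinomial_pos _ _)

theorem sum_le_pow_mul_multinomial (α : σ → ℕ) {l : σ} (hl : α l ≠ 0) :
    ∑ j, α j ≤ α l ^ (∑ j, α j) * Nat.multinomial univ α := by
  set m := ∑ j, α j
  have hlm : α l ≤ m := single_le_sum (fun _ _ ↦ Nat.zero_le _) (mem_univ l)
  obtain ⟨k, hk⟩ := Nat.exists_eq_add_one_of_ne_zero hl
  obtain ⟨n, hn⟩ : ∃ n, m = n + 1 := Nat.exists_eq_add_one_of_ne_zero (by omega)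
  calc m ≤ (n + 1) * n.choose k := by
        rw [hn]; exact Nat.le_mul_of_pos_right _ (Nat.choose_pos (by omega))
    _ = α l * m.choose (α l) := by rw [hn, hk, Nat.add_one_mul_choose_eq, mul_comm]
    _ ≤ α l ^ m * Nat.multinomial univ α :=
        Nat.mul_le_mul (Nat.le_self_pow (by omega) _) (choose_le_multinomial α l)

theorem mul_multinomial_rpow_le {α : σ →₀ ℕ} {m : ℕ} (hm : m ≠ 0) (hα : α.degree = m)
    {s : σ → ℝ} (hs : ∀ l, 0 ≤ s l) {y : ℝ} (hy : 0 ≤ y) (hsy : ∀ l, s l = 0 → α l * y = 0) :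
    y * (Nat.multinomial univ α : ℝ) ^ (m : ℝ)⁻¹ ≤
      (∑ l, α l / m * y / s l) *
        ((Nat.multinomial univ α : ℝ) * ∏ l, s l ^ α l) ^ (m : ℝ)⁻¹ := by
  obtain rfl | hy0 := eq_or_ne y 0
  · simp
  have hm0 : (m : ℝ) ≠ 0 := Nat.cast_ne_zero.mpr hm
  have hweights : ∑ l, (α l / m : ℝ) = 1 := by
    rw [← sum_div, div_eq_one_iff_eq hm0]
    exact_mod_cast (Finsupp.degree_eq_sum α).symm.trans hα
  have hamgm := one_le_sum_div_mul_prod_rpow (θ := fun l ↦ (α l / m : ℝ)) (fun l ↦ by positivity)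
    hweights hs fun l hl ↦ by rw [(mul_eq_zero_iff_right hy0).mp (hsy l hl), zero_div]
  have hprod : (∏ l, s l ^ α l) ^ (m : ℝ)⁻¹ = ∏ l, s l ^ (α l / m : ℝ) := by
    rw [← Real.finsetProd_rpow _ _ fun l _ ↦ pow_nonneg (hs l) _]
    refine prod_congr rfl fun l _ ↦ ?_
    rw [← Real.rpow_natCast_mul (hs l), div_eq_mul_inv]
  calc y * (Nat.multinomial univ α : ℝ) ^ (m : ℝ)⁻¹
      ≤ y * (Nat.multinomial univ α : ℝ) ^ (m : ℝ)⁻¹ *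
          ((∑ l, α l / m / s l) * ∏ l, s l ^ (α l / m : ℝ)) :=
        le_mul_of_one_le_right (by positivity) hamgm
    _ = _ := by
        rw [Real.mul_rpow (Nat.cast_nonneg _) (prod_nonneg fun l _ ↦ pow_nonneg (hs l) _), hprod]
        simp only [mul_div_right_comm _ y, ← sum_mul]
        ring

theorem sum_rpow_le_of_sq_le_mul_rpow {A : Finset ι} {x u v : ι → ℝ} {m : ℝ} (hm : 0 < m)
    (hx : ∀ i ∈ A, 0 ≤ x i) (hu : ∀ i ∈ A, 0 ≤ u i) (hv : ∀ i ∈ A, 0 ≤ v i)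
    (h : ∀ i ∈ A, x i ^ 2 ≤ u i * v i ^ m⁻¹) :
    ∑ i ∈ A, x i ^ (2 * m / (m + 1)) ≤
      (∑ i ∈ A, u i) ^ (m / (m + 1)) * (∑ i ∈ A, v i) ^ (m + 1)⁻¹ := by
  refine (sum_le_sum fun i hi ↦ ?_).trans
    (sum_rpow_mul_rpow_le hu hv (by positivity) (by positivity) (by field_simp))
  calc x i ^ (2 * m / (m + 1)) = (x i ^ 2) ^ (m / (m + 1)) := by
        rw [← Real.rpow_natCast_mul (hx i hi), Nat.cast_ofNat, mul_div_assoc]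
    _ ≤ (u i * v i ^ m⁻¹) ^ (m / (m + 1)) := by gcongr; exact h i hi
    _ = u i ^ (m / (m + 1)) * v i ^ (m + 1)⁻¹ := by
        rw [Real.mul_rpow (hu i hi) (Real.rpow_nonneg (hv i hi) _), ← Real.rpow_mul (hv i hi)]
        congr 2
        field_simp

theorem sum_rpow_le_sum_rpow_of_sq_le {m : ℕ} (hm : m ≠ 0) {A : Finset (σ →₀ ℕ)}
    (hA : ∀ α ∈ A, α.degree = m) {x u : (σ →₀ ℕ) → ℝ} {s : σ → ℝ} (hx : ∀ α ∈ A, 0 ≤ x α)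
    (hu : ∀ α ∈ A, 0 ≤ u α) (hs : ∀ l, 0 ≤ s l) (hus : ∑ α ∈ A, u α ≤ ∑ l, s l)
    (h : ∀ α ∈ A,
      x α ^ 2 ≤ u α * ((Nat.multinomial univ α : ℝ) * ∏ l, s l ^ α l) ^ (m : ℝ)⁻¹) :
    ∑ α ∈ A, x α ^ ((2 * m : ℝ) / (m + 1)) ≤ (∑ l, s l) ^ ((2 * m : ℝ) / (m + 1)) := by
  have hm0 : (0 : ℝ) < m := by positivity
  have hS : 0 ≤ ∑ l, s l := sum_nonneg fun l _ ↦ hs l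
  have hv (α : σ →₀ ℕ) : 0 ≤ (Nat.multinomial univ α : ℝ) * ∏ l, s l ^ α l :=
    mul_nonneg (Nat.cast_nonneg _) (prod_nonneg fun l _ ↦ pow_nonneg (hs l) _)
  calc ∑ α ∈ A, x α ^ ((2 * m : ℝ) / (m + 1))
      ≤ (∑ α ∈ A, u α) ^ (m / (m + 1) : ℝ) *
          (∑ α ∈ A, (Nat.multinomial univ α : ℝ) * ∏ l, s l ^ α l) ^ ((m : ℝ) + 1)⁻¹ :=
        sum_rpow_le_of_sq_le_mul_rpow hm0 hx hu (fun α _ ↦ hv α) h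
    _ ≤ (∑ l, s l) ^ (m / (m + 1) : ℝ) * ((∑ l, s l) ^ m) ^ ((m : ℝ) + 1)⁻¹ :=
        mul_le_mul (Real.rpow_le_rpow (sum_nonneg hu) hus (by positivity))
          (Real.rpow_le_rpow (sum_nonneg fun α _ ↦ hv α)
            (sum_multinomial_mul_prod_pow_le hA hs) (by positivity))
          (Real.rpow_nonneg (sum_nonneg fun α _ ↦ hv α) _) (Real.rpow_nonneg hS _)
    _ = (∑ l, s l) ^ ((2 * m : ℝ) / (m + 1)) := by
        rw [← Real.rpow_natCast_mul hS,
          ← Real.rpow_add_of_nonneg hS (by positivity) (by positivity)]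
        ring_nf

theorem blei_inequality {m : ℕ} (hm : m ≠ 0) {A : Finset (σ →₀ ℕ)}
    (hA : ∀ α ∈ A, α.degree = m) {x : (σ →₀ ℕ) → ℝ} (hx : ∀ α ∈ A, 0 ≤ x α) :
    (∑ α ∈ A, x α ^ ((2 * m : ℝ) / (m + 1))) ^ (((m : ℝ) + 1) / (2 * m)) ≤
      ∑ l, √(∑ α ∈ A, (α l / m : ℝ) * (x α ^ 2 / (Nat.multinomial univ α : ℝ) ^ (m : ℝ)⁻¹)) := by
  have hm0 : (0 : ℝ) < m := by positivity
  set y : (σ →₀ ℕ) → ℝ := fun α ↦ x α ^ 2 / (Nat.multinomial univ α : ℝ) ^ (m : ℝ)⁻¹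
  set s : σ → ℝ := fun l ↦ √(∑ α ∈ A, (α l / m : ℝ) * y α)
  have hy (α : σ →₀ ℕ) : 0 ≤ y α := by positivity
  have hterm (l : σ) (α : σ →₀ ℕ) : 0 ≤ (α l / m : ℝ) * y α := mul_nonneg (by positivity) (hy α)
  have hs (l : σ) : 0 ≤ s l := Real.sqrt_nonneg _
  have hsy (α) (hα : α ∈ A) (l) (hl : s l = 0) : α l * y α = 0 := by
    have h0 := (Real.sqrt_eq_zero (sum_nonneg fun α _ ↦ hterm l α)).mp hl
    have := (sum_eq_zero_iff_of_nonneg fun α _ ↦ hterm l α).mp h0 α hα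
    rwa [div_mul_eq_mul_div, div_eq_zero_iff, or_iff_left hm0.ne'] at this
  have hsum : ∑ α ∈ A, ∑ l, α l / m * y α / s l = ∑ l, s l := by
    rw [sum_comm]
    refine sum_congr rfl fun l _ ↦ ?_
    rw [← sum_div, Real.div_sqrt]
  rw [← inv_div (2 * m : ℝ), Real.rpow_inv_le_iff_of_pos
    (sum_nonneg fun α hα ↦ Real.rpow_nonneg (hx α hα) _) (sum_nonneg fun l _ ↦ hs l)
    (by positivity)]
  refine sum_rpow_le_sum_rpow_of_sq_le hm hA hx
    (fun α _ ↦ sum_nonneg fun l _ ↦ div_nonneg (hterm l α) (hs l)) hs hsum.le fun α hα ↦ ?_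
  have hμ : (0 : ℝ) < Nat.multinomial univ α := Nat.cast_pos.mpr (Nat.multinomial_pos _ _)
  refine le_of_eq_of_le ?_ (mul_multinomial_rpow_le hm (hA α hα) hs (hy α) (hsy α hα))
  exact (div_mul_cancel₀ _ (Real.rpow_pos_of_pos hμ _).ne').symm

theorem div_multinomial_rpow_le {m : ℕ} (hm : m ≠ 0) {α : σ →₀ ℕ} (hα : α.degree = m) (l : σ) :
    (α l / m : ℝ) / (Nat.multinomial univ α : ℝ) ^ (m : ℝ)⁻¹ ≤
      (m : ℝ) ^ ((m - 1) / m : ℝ) * (α l / m) ^ 2 := by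
  obtain hl | hl := eq_or_ne (α l) 0
  · simp [hl]
  have hm0 : (0 : ℝ) < m := by positivity
  have hμ : (0 : ℝ) < Nat.multinomial univ α := Nat.cast_pos.mpr (Nat.multinomial_pos _ _)
  have hroot : (m : ℝ) ^ (m : ℝ)⁻¹ ≤ α l * (Nat.multinomial univ α : ℝ) ^ (m : ℝ)⁻¹ := by
    rw [Real.rpow_inv_le_iff_of_pos hm0.le (by positivity) hm0, Real.rpow_natCast, mul_pow,
      Real.rpow_inv_natCast_pow hμ.le hm]
    have := sum_le_pow_mul_multinomial α hl
    rw [← Finsupp.degree_eq_sum, hα] at this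
    exact_mod_cast this
  rw [div_le_iff₀ (by positivity)]
  calc (α l / m : ℝ) = (m : ℝ) ^ ((m - 1) / m : ℝ) * (m : ℝ) ^ (m : ℝ)⁻¹ * (α l / m ^ 2) := by
        rw [← Real.rpow_add hm0, show ((m : ℝ) - 1) / m + (m : ℝ)⁻¹ = 1 by field_simp; ring,
          Real.rpow_one]
        field_simp
    _ ≤ (m : ℝ) ^ ((m - 1) / m : ℝ) * (α l * (Nat.multinomial univ α : ℝ) ^ (m : ℝ)⁻¹) *
          (α l / m ^ 2) := by gcongr
    _ = _ := by ring

theorem blei_inequality_of_sq_weight {m : ℕ} (hm : m ≠ 0) {A : Finset (σ →₀ ℕ)}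
    (hA : ∀ α ∈ A, α.degree = m) {x : (σ →₀ ℕ) → ℝ} (hx : ∀ α ∈ A, 0 ≤ x α) :
    (∑ α ∈ A, x α ^ ((2 * m : ℝ) / (m + 1))) ^ (((m : ℝ) + 1) / (2 * m)) ≤
      (m : ℝ) ^ (((m : ℝ) - 1) / (2 * m)) *
        ((∑ l, √(∑ α ∈ A, (α l : ℝ) ^ 2 * x α ^ 2)) / m) := by
  rw [sum_div, mul_sum]
  refine (blei_inequality hm hA hx).trans (sum_le_sum fun l _ ↦ ?_)
  have hfactor : (m : ℝ) ^ (((m : ℝ) - 1) / (2 * m)) = √((m : ℝ) ^ ((m - 1) / m : ℝ)) := by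
    rw [Real.sqrt_eq_rpow, ← Real.rpow_mul (Nat.cast_nonneg m)]
    ring_nf
  rw [hfactor, ← Real.sqrt_sq (Nat.cast_nonneg (α := ℝ) m), ← Real.sqrt_div' _ (by positivity),
    ← Real.sqrt_mul (by positivity), Real.sqrt_sq (Nat.cast_nonneg m), sum_div, mul_sum]
  refine Real.sqrt_le_sqrt (sum_le_sum fun α hα ↦ ?_)
  calc (α l / m : ℝ) * (x α ^ 2 / (Nat.multinomial univ α : ℝ) ^ (m : ℝ)⁻¹)
      = (α l / m : ℝ) / (Nat.multinomial univ α : ℝ) ^ (m : ℝ)⁻¹ * x α ^ 2 := by ring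
    _ ≤ (m : ℝ) ^ ((m - 1) / m : ℝ) * (α l / m) ^ 2 * x α ^ 2 := by
        gcongr
        exact div_multinomial_rpow_le hm (hA α hα) l
    _ = _ := by ring

end Blei

section Bernstein

open Metric MvPolynomial

variable {σ : Type*}

theorem degree_eq_of_mem_support {R : Type*} [CommSemiring R] {P : MvPolynomial σ R} {m : ℕ}
    (hP : P.IsHomogeneous m) {α : σ →₀ ℕ} (hα : α ∈ P.support) : α.degree = m :=
  of_not_not fun h ↦ mem_support_iff.mp hα (hP.coeff_eq_zero h)

theorem eval_smul_of_isHomogeneous {R : Type*} [CommSemiring R] {P : MvPolynomial σ R} {m : ℕ}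
    (hP : P.IsHomogeneous m) (r : R) (z : σ → R) : eval (r • z) P = r ^ m * eval z P := by
  simp only [eval_eq, mul_sum]
  refine sum_congr rfl fun α hα ↦ ?_
  rw [← degree_eq_of_mem_support hP hα, Finsupp.degree_apply]
  simp only [Pi.smul_apply, smul_eq_mul, mul_pow, prod_mul_distrib, prod_pow_eq_pow_sum]
  ring

variable [Fintype σ]

theorem hasDerivAt_eval_comp {𝕜 : Type*} [NontriviallyNormedField 𝕜] (P : MvPolynomial σ 𝕜)
    {f : 𝕜 → σ → 𝕜} {f' : σ → 𝕜} {t : 𝕜} (hf : HasDerivAt f f' t) :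
    HasDerivAt (fun t ↦ eval (f t) P) (∑ l, f' l * eval (f t) (pderiv l P)) t := by
  classical
  induction P using MvPolynomial.induction_on with
  | C a => simpa using hasDerivAt_const t a
  | add p q hp hq => simpa [mul_add, sum_add_distrib] using hp.fun_add hq
  | mul_X p i hp =>
    have hsum : ∑ l, f' l * eval (f t) (pderiv l (p * X i)) =
        (∑ l, f' l * eval (f t) (pderiv l p)) * f t i + eval (f t) p * f' i := by
      simp only [pderiv_mul, pderiv_X, map_add, map_mul, eval_X, mul_add, sum_add_distrib, sum_mul,
        mul_assoc]
      simp [Pi.single_apply, apply_ite, mul_comm]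
    simpa only [map_mul, eval_X, hsum] using hp.fun_mul (hasDerivAt_pi.mp hf i)

variable {P : MvPolynomial σ ℂ} {m : ℕ} {B : ℝ}

theorem norm_eval_le_norm_pow_mul (hP : P.IsHomogeneous m)
    (hB : ∀ z : σ → ℂ, ‖z‖ ≤ 1 → ‖eval z P‖ ≤ B) (z : σ → ℂ) : ‖eval z P‖ ≤ ‖z‖ ^ m * B := by
  obtain ⟨y, hy, hz⟩ : ∃ y : σ → ℂ, ‖y‖ ≤ 1 ∧ z = (‖z‖ : ℂ) • y := by
    obtain rfl | hz := eq_or_ne z 0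
    · exact ⟨0, by simp⟩
    · exact ⟨(‖z‖ : ℂ)⁻¹ • z, by simp [norm_smul, hz], (smul_inv_smul₀ (by simpa) z).symm⟩
  calc ‖eval z P‖ = ‖z‖ ^ m * ‖eval y P‖ := by
        rw [hz, eval_smul_of_isHomogeneous hP, ← hz, norm_mul, norm_pow, Complex.norm_real,
          norm_norm]
    _ ≤ ‖z‖ ^ m * B := by gcongr; exact hB y hy

theorem norm_sum_mul_eval_pderiv_le_div (hP : P.IsHomogeneous m)
    (hB : ∀ z : σ → ℂ, ‖z‖ ≤ 1 → ‖eval z P‖ ≤ B) {y z : σ → ℂ} (hy : ‖y‖ ≤ 1) (hz : ‖z‖ ≤ 1)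
    {r : ℝ} (hr : 0 < r) : ‖∑ l, y l * eval z (pderiv l P)‖ ≤ (1 + r) ^ m * B / r := by
  have hB0 : 0 ≤ B := (norm_nonneg _).trans (hB z hz)
  have hline (t : ℂ) : HasDerivAt (fun t : ℂ ↦ z + t • y) y t := by
    simpa using ((hasDerivAt_id t).smul_const y).const_add z
  have hderiv (t : ℂ) := hasDerivAt_eval_comp P (hline t)
  have hbound (t : ℂ) (ht : t ∈ sphere 0 r) : ‖eval (z + t • y) P‖ ≤ (1 + r) ^ m * B := by
    refine (norm_eval_le_norm_pow_mul hP hB _).trans ?_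
    gcongr
    calc ‖z + t • y‖ ≤ ‖z‖ + ‖t‖ * ‖y‖ := (norm_add_le _ _).trans_eq (by rw [norm_smul])
      _ ≤ 1 + r * 1 := by rw [mem_sphere_zero_iff_norm.mp ht]; gcongr
      _ = 1 + r := by rw [mul_one]
  have hdiff : Differentiable ℂ fun t : ℂ ↦ eval (z + t • y) P :=
    fun t ↦ (hderiv t).differentiableAt
  have hcauchy := Complex.norm_deriv_le_of_forall_mem_sphere_norm_le hr hdiff.diffContOnCl hbound
  rwa [(hderiv 0).deriv, zero_smul, add_zero] at hcauchy

theorem sum_norm_eval_pderiv_le (hm : 2 ≤ m) (hP : P.IsHomogeneous m)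
    (hB : ∀ z : σ → ℂ, ‖z‖ ≤ 1 → ‖eval z P‖ ≤ B) {z : σ → ℂ} (hz : ‖z‖ ≤ 1) :
    ∑ l, ‖eval z (pderiv l P)‖ ≤ m * ((m / (m - 1) : ℝ) ^ (m - 1) * B) := by
  have hm1 : (0 : ℝ) < m - 1 := sub_pos.mpr (Nat.one_lt_cast.mpr hm)
  choose y hy hyz using fun l ↦ RCLike.exists_norm_eq_mul_self (eval z (pderiv l P))
  have hy1 : ‖y‖ ≤ 1 := (pi_norm_le_iff_of_nonneg zero_le_one).mpr fun l ↦ (hy l).le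
  calc ∑ l, ‖eval z (pderiv l P)‖ = ‖∑ l, y l * eval z (pderiv l P)‖ := by
        simp_rw [← hyz, RCLike.ofReal_eq_complex_ofReal]
        rw [← Complex.ofReal_sum, Complex.norm_of_nonneg (sum_nonneg fun l _ ↦ norm_nonneg _)]
    _ ≤ (1 + (m - 1 : ℝ)⁻¹) ^ m * B / (m - 1 : ℝ)⁻¹ :=
        norm_sum_mul_eval_pderiv_le_div hP hB hy1 hz (inv_pos.mpr hm1)
    _ = m * ((m / (m - 1) : ℝ) ^ (m - 1) * B) := by
        rw [show 1 + (m - 1 : ℝ)⁻¹ = m / (m - 1) by field_simp; ring,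
          ← pow_sub_one_mul (by omega : m ≠ 0)]
        field_simp

end Bernstein

section BohnenblustHille

open MeasureTheory MvPolynomial

theorem sum_hardyNorm_pderiv_le {σ : Type*} [Fintype σ] {P : MvPolynomial σ ℂ} {m : ℕ} {B : ℝ}
    (hm : 2 ≤ m) (hP : P.IsHomogeneous m) (hB : ∀ z : σ → ℂ, ‖z‖ ≤ 1 → ‖eval z P‖ ≤ B) :
    ∑ l, hardyNorm (pderiv l P) ≤ m * ((m / (m - 1) : ℝ) ^ (m - 1) * B) := by
  have hint (l : σ) := integrable_norm_eval_torusPoint (pderiv l P)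
  calc ∑ l, hardyNorm (pderiv l P)
      = ∫ t : UnitAddTorus σ, ∑ l, ‖eval (torusPoint t) (pderiv l P)‖ :=
        (integral_finsetSum _ fun l _ ↦ hint l).symm
    _ ≤ ∫ _ : UnitAddTorus σ, m * ((m / (m - 1) : ℝ) ^ (m - 1) * B) :=
        integral_mono (integrable_finsetSum _ fun l _ ↦ hint l) (integrable_const _) fun t ↦
          sum_norm_eval_pderiv_le hm hP hB <|
            (pi_norm_le_iff_of_nonneg zero_le_one).mpr fun j ↦ (norm_torusPoint_apply t j).le
    _ = m * ((m / (m - 1) : ℝ) ^ (m - 1) * B) := by simp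

theorem weighted_bohnenblust_hille {n m : ℕ} {P : MvPolynomial (Fin n) ℂ} {B : ℝ} (hm : 2 ≤ m)
    (hP : P.IsHomogeneous m) (hB : ∀ z : Fin n → ℂ, ‖z‖ ≤ 1 → ‖eval z P‖ ≤ B) :
    (∑ α ∈ P.support, (‖coeff α P‖ / √(∏ j, ((α j : ℝ) + 1))) ^ ((2 * m : ℝ) / (m + 1))) ^
        (((m : ℝ) + 1) / (2 * m)) ≤
      (m : ℝ) ^ (((m : ℝ) - 1) / (2 * m)) * ((m / (m - 1) : ℝ) ^ (m - 1) * B) := by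
  have hderiv (l : Fin n) :
      √(∑ α ∈ P.support, (α l : ℝ) ^ 2 * (‖coeff α P‖ / √(∏ j, ((α j : ℝ) + 1))) ^ 2) ≤
        hardyNorm (pderiv l P) := by
    refine le_trans ?_ (bergmanNorm_le_hardyNorm (pderiv l P))
    refine Real.sqrt_le_iff.mpr ⟨bergmanNorm_nonneg _, le_of_eq_of_le ?_
      (sum_sq_mul_norm_coeff_sq_div_le P l)⟩
    refine sum_congr rfl fun α _ ↦ ?_
    rw [div_pow, Real.sq_sqrt (by positivity)]
  refine (blei_inequality_of_sq_weight (by omega) (fun α ↦ degree_eq_of_mem_support hP)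
    fun α _ ↦ by positivity).trans ?_
  gcongr
  rw [div_le_iff₀' (by positivity)]
  exact (sum_le_sum fun l _ ↦ hderiv l).trans (sum_hardyNorm_pderiv_le hm hP hB)

theorem rpow_sum_rpow_le_mul {ι : Type*} {s : Finset ι} {x w : ι → ℝ} {C p : ℝ} (hC : 0 ≤ C)
    (hp : 0 < p) (hx : ∀ i ∈ s, 0 ≤ x i) (hw : ∀ i ∈ s, 0 ≤ w i) (h : ∀ i ∈ s, x i ≤ C * w i) :
    (∑ i ∈ s, x i ^ p) ^ p⁻¹ ≤ C * (∑ i ∈ s, w i ^ p) ^ p⁻¹ := by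
  have hw_sum : 0 ≤ ∑ i ∈ s, w i ^ p := sum_nonneg fun i hi ↦ Real.rpow_nonneg (hw i hi) p
  rw [← Real.rpow_rpow_inv hC hp.ne', ← Real.mul_rpow (Real.rpow_nonneg hC p) hw_sum, mul_sum]
  refine Real.rpow_le_rpow (sum_nonneg fun i hi ↦ Real.rpow_nonneg (hx i hi) p)
    (sum_le_sum fun i hi ↦ ?_) (by positivity)
  rw [← Real.mul_rpow hC (hw i hi)]
  exact Real.rpow_le_rpow (hx i hi) (h i hi) hp.le

theorem prod_add_one_le_two_pow {σ : Type*} [Fintype σ] (α : σ →₀ ℕ) :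
    ∏ j, ((α j : ℝ) + 1) ≤ 2 ^ α.degree := by
  rw [Finsupp.degree_eq_sum, ← prod_pow_eq_pow_sum]
  gcongr with j
  exact_mod_cast Nat.lt_two_pow_self (n := α j)

theorem bohnenblust_hille_mvPolynomial {n m : ℕ} {P : MvPolynomial (Fin n) ℂ} {B : ℝ} (hm : 2 ≤ m)
    (hP : P.IsHomogeneous m) (hB : ∀ z : Fin n → ℂ, ‖z‖ ≤ 1 → ‖eval z P‖ ≤ B) :
    (∑ α ∈ P.support, ‖coeff α P‖ ^ ((2 * m : ℝ) / (m + 1))) ^ (((m : ℝ) + 1) / (2 * m)) ≤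
      2 ^ ((m : ℝ) / 2) *
        ((m : ℝ) ^ (((m : ℝ) - 1) / (2 * m)) * ((m / (m - 1) : ℝ) ^ (m - 1) * B)) := by
  refine le_trans ?_ (mul_le_mul_of_nonneg_left (weighted_bohnenblust_hille hm hP hB)
    (by positivity))
  rw [← inv_div (2 * m : ℝ)]
  refine rpow_sum_rpow_le_mul (by positivity) (by positivity) (fun α _ ↦ norm_nonneg _)
    (fun α _ ↦ by positivity) fun α hα ↦ ?_
  have hsqrt : √(∏ j, ((α j : ℝ) + 1)) ≤ 2 ^ ((m : ℝ) / 2) := by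
    refine Real.sqrt_le_iff.mpr ⟨by positivity, ?_⟩
    rw [← Real.rpow_mul_natCast zero_le_two, Nat.cast_ofNat, div_mul_cancel₀ _ two_ne_zero,
      Real.rpow_natCast, ← degree_eq_of_mem_support hP hα]
    exact prod_add_one_le_two_pow α
  calc ‖coeff α P‖ = √(∏ j, ((α j : ℝ) + 1)) * (‖coeff α P‖ / √(∏ j, ((α j : ℝ) + 1))) :=
        (mul_div_cancel₀ _ (by positivity)).symm
    _ ≤ 2 ^ ((m : ℝ) / 2) * (‖coeff α P‖ / √(∏ j, ((α j : ℝ) + 1))) := by gcongr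

/-- The homogeneous polynomial of degree `m` with coefficients `c`. -/
noncomputable def homogeneousPolynomial {R : Type*} [CommSemiring R] {n : ℕ} (m : ℕ)
    (c : (Fin n → ℕ) → R) : MvPolynomial (Fin n) R :=
  ∑ α ∈ Nat.antidiagonalTuple n m, monomial (Finsupp.equivFunOnFinite.symm α) (c α)

section HomogeneousPolynomial

variable {R : Type*} [CommSemiring R] {n : ℕ} (m : ℕ) (c : (Fin n → ℕ) → R)

theorem isHomogeneous_homogeneousPolynomial : (homogeneousPolynomial m c).IsHomogeneous m :=
  .sum _ _ _ fun α hα ↦ isHomogeneous_monomial _ <| by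
    rw [Finsupp.degree_eq_sum]
    exact Nat.mem_antidiagonalTuple.mp hα

theorem eval_homogeneousPolynomial (z : Fin n → R) :
    eval z (homogeneousPolynomial m c) =
      ∑ α ∈ Nat.antidiagonalTuple n m, c α * ∏ j, z j ^ α j := by
  simp [homogeneousPolynomial, eval_monomial, Finsupp.prod_fintype]

theorem sum_support_homogeneousPolynomial {M : Type*} [AddCommMonoid M] {f : R → M}
    (hf : f 0 = 0) :
    ∑ α ∈ (homogeneousPolynomial m c).support, f (coeff α (homogeneousPolynomial m c)) =
      ∑ α ∈ Nat.antidiagonalTuple n m, f (c α) := by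
  classical
  set P := homogeneousPolynomial m c
  have hcoeff (α : Fin n → ℕ) (hα : α ∈ Nat.antidiagonalTuple n m) :
      coeff (Finsupp.equivFunOnFinite.symm α) P = c α := by
    simp [P, homogeneousPolynomial, coeff_sum, coeff_monomial, hα]
  have hsupport : P.support ⊆
      (Nat.antidiagonalTuple n m).map Finsupp.equivFunOnFinite.symm.toEmbedding := by
    intro β hβ
    rw [mem_map_equiv, Equiv.symm_symm, Nat.mem_antidiagonalTuple]
    exact (Finsupp.degree_eq_sum β).symm.trans
      (degree_eq_of_mem_support (isHomogeneous_homogeneousPolynomial m c) hβ)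
  rw [sum_subset hsupport fun β _ hβ ↦ by rw [notMem_support_iff.mp hβ, hf], sum_map]
  exact sum_congr rfl fun α hα ↦ congrArg f (hcoeff α hα)

end HomogeneousPolynomial

theorem le_biSup_of_isCompact {X : Type*} [TopologicalSpace X] {K : Set X} (hK : IsCompact K)
    {f : X → ℝ} (hf : ContinuousOn f K) {x : X} (hx : x ∈ K) : f x ≤ ⨆ z ∈ K, f z :=
  le_ciSup₂ (f := fun z (_ : z ∈ K) ↦ f z) ((hK.bddAbove_image hf).mono <|
    Set.iUnion_subset fun _ ↦ Set.range_subset_iff.mpr fun hz ↦ Set.mem_image_of_mem f hz) x hx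

end BohnenblustHille

/-- **Hypercontractive Bohnenblust–Hille inequality** with the constant of the paper.
For `m ≥ 2`, `N ≥ 1` and an `m`-homogeneous polynomial `P(z) = ∑_{|α|=m} c_α z^α`:
`(∑_{|α|=m} |c_α|^{2m/(m+1)})^{(m+1)/(2m)}
  ≤ 2^{m/2} m^{(m-1)/(2m)} (m/(m-1))^{m-1} sup_{polydisc} |P|`. -/
theorem bohnenblust_hille (m N : ℕ) (hm : 2 ≤ m) (hN : 1 ≤ N)
    (c : (Fin N → ℕ) → ℂ) :
    (∑ α ∈ Finset.Nat.antidiagonalTuple N m,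
        ‖c α‖ ^ ((2 * m : ℝ) / (m + 1))) ^ (((m : ℝ) + 1) / (2 * m))
      ≤ 2 ^ ((m : ℝ) / 2) * (m : ℝ) ^ (((m : ℝ) - 1) / (2 * m)) *
          ((m : ℝ) / ((m : ℝ) - 1)) ^ (m - 1) *
        ⨆ z ∈ {z : Fin N → ℂ | ∀ j, ‖z j‖ ≤ 1},
          ‖∑ α ∈ Finset.Nat.antidiagonalTuple N m, c α * ∏ j, z j ^ α j‖ := by
  have hpolydisc : {z : Fin N → ℂ | ∀ j, ‖z j‖ ≤ 1} = Metric.closedBall 0 1 := by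
    ext z
    simp [pi_norm_le_iff_of_nonneg]
  have hp : (2 * m : ℝ) / (m + 1) ≠ 0 := by positivity
  simp only [hpolydisc, ← eval_homogeneousPolynomial, mul_assoc]
  rw [← sum_support_homogeneousPolynomial m c (f := fun a ↦ ‖a‖ ^ ((2 * m : ℝ) / (m + 1)))
    (by simp [hp])]
  refine bohnenblust_hille_mvPolynomial hm (isHomogeneous_homogeneousPolynomial m c) fun z hz ↦ ?_
  exact le_biSup_of_isCompact (isCompact_closedBall 0 1)
    (MvPolynomial.continuous_eval _).norm.continuousOn (mem_closedBall_zero_iff.mpr hz)
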